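/- arXiv:2302.01306 — 3 statements merged into one kernel-verified Lean document; each statement's English description precedes it below -/
import Mathlib

section
/- For every integer n ≥ 3, the graph G_n satisfies b(G_n) = 2n − 1, where b denotes the b-chromatic number. (Moreover Δ(G_n) = 2n − 2, so this attains the upper bound b(G_n) ≤ Δ(G_n) + 1.) -/
open SimpleGraph

universe u v

/-- `c` is a z-coloring of `G` using exactly the `k` colors `0, …, k-1`:
it is proper, every color class is nonempty, every vertex of color `j` has a
neighbor of each color `i < j` (Grundy property), and there are vertices
`u 0, …, u (k-1)` with `u j` of color `j`, such that `u (k-1)` is adjacent to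
every other `u j`, and each `u j` has a neighbor of every color `i ≠ j`. -/
def IsZColoring {V : Type u} (G : SimpleGraph V) (k : ℕ) (c : V → ℕ) : Prop :=
  (∀ v, c v < k) ∧
  (∀ ⦃x y : V⦄, G.Adj x y → c x ≠ c y) ∧
  (∀ i, i < k → ∃ v, c v = i) ∧
  (∀ v : V, ∀ i, i < c v → ∃ w, G.Adj v w ∧ c w = i) ∧
  (∃ u : ℕ → V,
    (∀ j, j < k → c (u j) = j) ∧
    (∀ j, j < k - 1 → G.Adj (u (k - 1)) (u j)) ∧
    (∀ i, i < k → ∀ j, j < k → i ≠ j → ∃ w, G.Adj (u j) w ∧ c w = i))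

/-- The z-chromatic number: the maximum number of colors in a z-coloring. -/
noncomputable def zNum {V : Type u} (G : SimpleGraph V) : ℕ :=
  sSup {k | ∃ c : V → ℕ, IsZColoring G k c}

/-- `c` is a Grundy coloring of `G` using exactly the `k` colors `0, …, k-1`. -/
def IsGrundyColoring {V : Type u} (G : SimpleGraph V) (k : ℕ) (c : V → ℕ) : Prop :=
  (∀ v, c v < k) ∧
  (∀ ⦃x y : V⦄, G.Adj x y → c x ≠ c y) ∧
  (∀ i, i < k → ∃ v, c v = i) ∧
  (∀ v : V, ∀ i, i < c v → ∃ w, G.Adj v w ∧ c w = i)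

/-- The Grundy number: the maximum number of colors in a Grundy coloring. -/
noncomputable def grundyNum {V : Type u} (G : SimpleGraph V) : ℕ :=
  sSup {k | ∃ c : V → ℕ, IsGrundyColoring G k c}

/-- `c` is a b-coloring of `G` using exactly the `k` colors `0, …, k-1`:
proper, and every color class contains a vertex adjacent to a vertex of every
other color class. -/
def IsBColoring {V : Type u} (G : SimpleGraph V) (k : ℕ) (c : V → ℕ) : Prop :=
  (∀ v, c v < k) ∧
  (∀ ⦃x y : V⦄, G.Adj x y → c x ≠ c y) ∧
  (∀ i, i < k → ∃ v, c v = i ∧ ∀ j, j < k → j ≠ i → ∃ w, G.Adj v w ∧ c w = j)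

/-- The b-chromatic number: the maximum number of colors in a b-coloring. -/
noncomputable def bNum {V : Type u} (G : SimpleGraph V) : ℕ :=
  sSup {k | ∃ c : V → ℕ, IsBColoring G k c}

/-- The chromatic number, as a natural number. -/
noncomputable def chromNum {V : Type u} (G : SimpleGraph V) : ℕ :=
  sInf {k | G.Colorable k}

/-- The maximum degree of a graph (degree measured by `Set.ncard` of the
neighbor set), as the supremum of all achieved degrees. -/
noncomputable def maxDeg {V : Type u} (G : SimpleGraph V) : ℕ :=
  sSup {d | ∃ v : V, (G.neighborSet v).ncard = d}

/-- Vertex set of the graph `Gₙ`: for each `i : Fin n` we have the core vertex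
`(i, Sum.inl ())` (this is `vᵢ = vₙⁱ`), the `n-1` further clique vertices
`(i, Sum.inr (Sum.inl j))` of `K(vᵢ)` (with `j = 0` being `v₁ⁱ`), and the
`n-1` pendant leaves `(i, Sum.inr (Sum.inr l))` attached to `v₁ⁱ`. -/
abbrev GnVert (n : ℕ) : Type := Fin n × (Unit ⊕ (Fin (n - 1) ⊕ Fin (n - 1)))

/-- The graph `Gₙ`: a complete graph `Kₙ` on the core vertices `v₁, …, vₙ`;
for each `i` a complete graph `K(vᵢ)` on `n` vertices containing `vᵢ`;
and `n - 1` pendant leaves attached to the vertex `v₁ⁱ` of each `K(vᵢ)`. -/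
def Gn (n : ℕ) : SimpleGraph (GnVert n) :=
  SimpleGraph.fromRel (fun x y =>
    -- the central clique on the `n` core vertices
    (x.1 ≠ y.1 ∧ x.2 = Sum.inl () ∧ y.2 = Sum.inl ()) ∨
    -- the clique `K(vᵢ)` on the core vertex together with the `n-1` others
    (x.1 = y.1 ∧
      (x.2 = Sum.inl () ∨ ∃ j, x.2 = Sum.inr (Sum.inl j)) ∧
      (y.2 = Sum.inl () ∨ ∃ j, y.2 = Sum.inr (Sum.inl j))) ∨
    -- the pendant leaves attached to `v₁ⁱ`
    (x.1 = y.1 ∧ (∃ j : Fin (n - 1), x.2 = Sum.inr (Sum.inl j) ∧ (j : ℕ) = 0) ∧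
      (∃ l, y.2 = Sum.inr (Sum.inr l))))

/-!
A b-coloring with `k > 0` colors has a vertex `v` with `k ≤ |N[v]|`. A coloring of the square of
`G` is injective on closed neighborhoods, so if it uses `q` colors then `|N[v]| ≤ q` for all `v`,
and a vertex with `|N[v]| = q` sees every color. If each color occurs at such a vertex, the
coloring is therefore a b-coloring, and no b-coloring has more colors.

In `Gₙ` the closed neighborhood of `vᵢ` is the union of the central clique and `K(vᵢ)`, and that of
`v₁ⁱ` consists of `K(vᵢ)` and the leaves at `v₁ⁱ`; both have `2n - 1` vertices, and every other
closed neighborhood is contained in one of the latter kind. Give `vᵢ` the color `i`, color the rest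
of `K(vᵢ)` by `n - 1` further colors shifted cyclically with `i`, and the leaves at `v₁ⁱ` by the
colors of the central clique other than `i`.
-/

/-- The closed neighborhood `N[v]`: the vertex `v` together with its neighbors. -/
def closedNeighborSet {V : Type u} (G : SimpleGraph V) (v : V) : Set V :=
  insert v (G.neighborSet v)

theorem ncard_closedNeighborSet {V : Type u} {G : SimpleGraph V} {v : V}
    (hfin : (G.neighborSet v).Finite) :
    (closedNeighborSet G v).ncard = (G.neighborSet v).ncard + 1 :=
  Set.ncard_insert_of_notMem G.notMem_neighborSet_self hfin

theorem IsBColoring.exists_le_encard_closedNeighborSet {V : Type u} {G : SimpleGraph V} {k : ℕ}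
    {c : V → ℕ} (hc : IsBColoring G k c) (hk : 0 < k) :
    ∃ v, (k : ℕ∞) ≤ (closedNeighborSet G v).encard := by
  obtain ⟨v, hv, hdom⟩ := hc.2.2 0 hk
  have hsub : Set.Iio k ⊆ c '' closedNeighborSet G v := by
    intro j hj
    obtain rfl | hj0 := eq_or_ne j 0
    · exact ⟨v, Set.mem_insert _ _, hv⟩
    · obtain ⟨w, hvw, hw⟩ := hdom j hj hj0
      exact ⟨w, Set.mem_insert_of_mem _ hvw, hw⟩
  refine ⟨v, ?_⟩
  calc
    (k : ℕ∞) = (Set.Iio k).encard := by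
      rw [← Finset.coe_range, Set.encard_coe_eq_coe_finsetCard, Finset.card_range]
    _ ≤ (c '' closedNeighborSet G v).encard := Set.encard_le_encard hsub
    _ ≤ (closedNeighborSet G v).encard := Set.encard_image_le _ _

/-- `c` is a proper coloring of the square of `G`, that is, vertices at distance one or two get
different colors. This is encoded by injectivity on closed neighborhoods, since two distinct
vertices share a closed neighborhood exactly when their distance is one or two. -/
def IsSquareColoring {V : Type u} {α : Type v} (G : SimpleGraph V) (c : V → α) : Prop :=
  ∀ v, (closedNeighborSet G v).InjOn c

namespace IsSquareColoring

variable {V : Type u} {α : Type v} {G : SimpleGraph V} {c : V → α}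

theorem ne_of_adj (hc : IsSquareColoring G c) {x y : V} (h : G.Adj x y) : c x ≠ c y :=
  fun hxy => h.ne (hc x (Set.mem_insert _ _) (Set.mem_insert_of_mem _ h) hxy)

theorem encard_closedNeighborSet_le (hc : IsSquareColoring G c) (v : V) :
    (closedNeighborSet G v).encard ≤ ENat.card α :=
  (hc v).encard_image ▸ Set.encard_le_card

section Finite

variable [Finite α]

theorem finite_neighborSet (hc : IsSquareColoring G c) (v : V) : (G.neighborSet v).Finite :=
  ((Set.toFinite (c '' closedNeighborSet G v)).of_finite_image (hc v)).subset
    (Set.subset_insert _ _)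

theorem ncard_closedNeighborSet_le (hc : IsSquareColoring G c) (v : V) :
    (closedNeighborSet G v).ncard ≤ Nat.card α :=
  (hc v).ncard_image ▸ Set.ncard_le_card _

theorem exists_adj_of_ncard_eq (hc : IsSquareColoring G c) {v : V}
    (hv : (closedNeighborSet G v).ncard = Nat.card α) {a : α} (ha : a ≠ c v) :
    ∃ w, G.Adj v w ∧ c w = a := by
  have himage : c '' closedNeighborSet G v = Set.univ := by
    rw [Set.eq_univ_iff_ncard, (hc v).ncard_image, hv]
  obtain ⟨w, rfl | hvw, rfl⟩ := himage.symm ▸ Set.mem_univ a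
  · exact absurd rfl ha
  · exact ⟨w, hvw, rfl⟩

theorem exists_isBColoring (hc : IsSquareColoring G c)
    (hfull : ∀ a, ∃ v, c v = a ∧ (closedNeighborSet G v).ncard = Nat.card α) :
    ∃ c' : V → ℕ, IsBColoring G (Nat.card α) c' := by
  let e := Finite.equivFin α
  refine ⟨fun v => e (c v), fun v => (e (c v)).isLt, fun x y hxy h => ?_, fun i hi => ?_⟩
  · exact hc.ne_of_adj hxy (e.injective (Fin.ext h))
  · obtain ⟨v, hv, hcard⟩ := hfull (e.symm ⟨i, hi⟩)
    refine ⟨v, by simp [hv], fun j hj hji => ?_⟩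
    have hne : e.symm ⟨j, hj⟩ ≠ c v := by simpa [hv] using hji
    obtain ⟨w, hvw, hw⟩ := hc.exists_adj_of_ncard_eq hcard hne
    exact ⟨w, hvw, by simp [hw]⟩

theorem bNum_eq (hc : IsSquareColoring G c)
    (hfull : ∀ a, ∃ v, c v = a ∧ (closedNeighborSet G v).ncard = Nat.card α) :
    bNum G = Nat.card α := by
  refine IsGreatest.csSup_eq ⟨hc.exists_isBColoring hfull, ?_⟩
  rintro k ⟨c', hc'⟩
  obtain rfl | hk := k.eq_zero_or_pos
  · exact Nat.zero_le _
  · obtain ⟨v, hv⟩ := hc'.exists_le_encard_closedNeighborSet hk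
    have hle := hv.trans (hc.encard_closedNeighborSet_le v)
    rwa [ENat.card_eq_coe_natCard, Nat.cast_le] at hle

theorem maxDeg_eq (hc : IsSquareColoring G c)
    (hfull : ∃ v, (closedNeighborSet G v).ncard = Nat.card α) :
    maxDeg G = Nat.card α - 1 := by
  have hdeg (v : V) : (G.neighborSet v).ncard = (closedNeighborSet G v).ncard - 1 := by
    rw [ncard_closedNeighborSet (hc.finite_neighborSet v), Nat.add_sub_cancel]
  refine IsGreatest.csSup_eq ⟨?_, ?_⟩
  · obtain ⟨v, hv⟩ := hfull
    exact ⟨v, by rw [hdeg, hv]⟩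
  · rintro _ ⟨v, rfl⟩
    rw [hdeg]
    exact Nat.sub_le_sub_right (hc.ncard_closedNeighborSet_le v) 1

end Finite

end IsSquareColoring

namespace Gn

variable {m : ℕ}

/-- The vertex `vᵢ` of the central clique. Here and below the graph is `Gn (m + 1)`, so that
`n - 1 = m` holds by computation and `Fin.succAbove` applies to the leaves. -/
def core (i : Fin (m + 1)) : GnVert (m + 1) := (i, Sum.inl ())

/-- The vertex of `K(vᵢ)` other than `vᵢ` with index `j`, called `vⱼ₊₁ⁱ` in the paper. -/
def clique (i : Fin (m + 1)) (j : Fin m) : GnVert (m + 1) := (i, Sum.inr (Sum.inl j))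

/-- The clique `K(vᵢ)` together with the leaves attached to `v₁ⁱ`. -/
def block (i : Fin (m + 1)) : Set (GnVert (m + 1)) := Set.range (Prod.mk i)

/-- The union of the central clique with `K(vᵢ)`, parametrized by `Sum.elim core (clique i)` so
that `vᵢ` occurs only once. -/
def hub (i : Fin (m + 1)) : Set (GnVert (m + 1)) := Set.range (Sum.elim core (clique i))

/-- The cyclic shift `j ↦ i + j` of the indices modulo `m`, used to vary the coloring of
`K(vᵢ)` with `i`. -/
def shift (i : ℕ) (j : Fin m) : Fin m := ⟨(i + j) % m, Nat.mod_lt _ j.pos⟩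

/-- The `2m + 1` colors are split into `Fin (m + 1)`, for the central clique and the leaves, and
`Fin m`, for the vertices `clique i j`. Because of the shift, every color of the second kind
occurs at some `v₁ⁱ`; `Fin.succAbove` makes the leaves at `v₁ⁱ` avoid the color of `vᵢ`. -/
def coloring : GnVert (m + 1) → Fin (m + 1) ⊕ Fin m
  | (i, Sum.inl _) => Sum.inl i
  | (i, Sum.inr (Sum.inl j)) => Sum.inr (shift i j)
  | (i, Sum.inr (Sum.inr l)) => Sum.inl (i.succAbove l)

theorem closedNeighborSet_core (i : Fin (m + 1)) :
    closedNeighborSet (Gn (m + 1)) (core i) = hub i := by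
  ext ⟨i', ⟨⟩ | j | l⟩
  · by_cases h : i = i' <;> simp [closedNeighborSet, hub, core, clique, Gn, h, eq_comm]
  · simp [closedNeighborSet, hub, core, clique, Gn, eq_comm]
  · simp [closedNeighborSet, hub, core, clique, Gn]

theorem closedNeighborSet_clique_of_eq_zero (i : Fin (m + 1)) {j : Fin m} (hj : (j : ℕ) = 0) :
    closedNeighborSet (Gn (m + 1)) (clique i j) = block i := by
  ext ⟨i', ⟨⟩ | j' | l⟩
  · simp [closedNeighborSet, block, clique, Gn, eq_comm]
  · by_cases h : i = i' ∧ j = j' <;> simp_all [closedNeighborSet, block, clique, Gn, eq_comm]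
  · simp [closedNeighborSet, block, clique, Gn, hj, eq_comm]

theorem closedNeighborSet_subset_block (i : Fin (m + 1)) {s : Unit ⊕ Fin m ⊕ Fin m}
    (hs : s ≠ Sum.inl ()) : closedNeighborSet (Gn (m + 1)) (i, s) ⊆ block i := by
  rintro ⟨i', t⟩ (h | h)
  · exact ⟨t, by rw [(Prod.mk.inj h).1]⟩
  · have hfst : i = i' := by
      by_contra hi
      simp [Gn, hs, hi, Ne.symm hi] at h
    exact ⟨t, by rw [hfst]⟩

theorem shift_injective (i : ℕ) : Function.Injective (shift (m := m) i) := fun j j' h =>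
  Fin.ext <| (Nat.ModEq.add_left_cancel' i (Fin.val_eq_of_eq h)).eq_of_lt_of_lt j.isLt j'.isLt

theorem coloring_comp_mk_injective (i : Fin (m + 1)) :
    Function.Injective (coloring ∘ Prod.mk i) := by
  rintro (⟨⟩ | j | l) (⟨⟩ | j' | l') h <;>
    simp_all [coloring, (shift_injective i).eq_iff]

theorem coloring_comp_elim_injective (i : Fin (m + 1)) :
    Function.Injective (coloring ∘ Sum.elim core (clique i)) := by
  have hmap : coloring ∘ Sum.elim core (clique i) = Sum.map id (shift i) := by
    ext (a | j) <;> rfl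
  exact hmap ▸ Function.injective_id.sumMap (shift_injective i)

theorem ncard_block (i : Fin (m + 1)) : (block i).ncard = 2 * m + 1 := by
  rw [block, Set.ncard_range_of_injective (Prod.mk_right_injective i)]
  simp only [Nat.add_sub_cancel, Nat.card_sum, Nat.card_unique, Nat.card_fin]
  lia

theorem ncard_hub (i : Fin (m + 1)) : (hub i).ncard = 2 * m + 1 := by
  rw [hub, Set.ncard_range_of_injective (coloring_comp_elim_injective i).of_comp, Nat.card_sum,
    Nat.card_fin, Nat.card_fin]
  lia

theorem isSquareColoring_coloring : IsSquareColoring (Gn (m + 1)) coloring := by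
  rintro ⟨i, s⟩
  obtain rfl | hs := eq_or_ne s (Sum.inl ())
  · exact closedNeighborSet_core i ▸ (coloring_comp_elim_injective i).injOn_range
  · exact (coloring_comp_mk_injective i).injOn_range.mono (closedNeighborSet_subset_block i hs)

theorem exists_coloring_eq_and_ncard_closedNeighborSet (a : Fin (m + 1) ⊕ Fin m) :
    ∃ v, coloring v = a ∧ (closedNeighborSet (Gn (m + 1)) v).ncard = 2 * m + 1 := by
  obtain i | i := a
  · exact ⟨core i, rfl, by rw [closedNeighborSet_core, ncard_hub]⟩
  · refine ⟨clique i.castSucc ⟨0, i.pos⟩, ?_, ?_⟩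
    · exact congrArg Sum.inr (Fin.ext (Nat.mod_eq_of_lt i.isLt))
    · rw [closedNeighborSet_clique_of_eq_zero _ rfl, ncard_block]

end Gn

theorem bNum_Gn_general (n : ℕ) (hn : 0 < n) :
    bNum (Gn n) = 2 * n - 1 ∧ maxDeg (Gn n) = 2 * n - 2 := by
  obtain ⟨m, rfl⟩ := Nat.exists_eq_add_of_lt hn
  rw [Nat.zero_add]
  have hc := Gn.isSquareColoring_coloring (m := m)
  have hcard : Nat.card (Fin (m + 1) ⊕ Fin m) = 2 * m + 1 := by
    rw [Nat.card_sum, Nat.card_fin, Nat.card_fin]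
    lia
  have hfull := hcard ▸ Gn.exists_coloring_eq_and_ncard_closedNeighborSet (m := m)
  obtain ⟨v, -, hv⟩ := hfull (Sum.inl 0)
  rw [hc.bNum_eq hfull, hc.maxDeg_eq ⟨v, hv⟩, hcard]
  lia

/-- for every `n ≥ 3`, the b-chromatic number of `Gₙ` is `2n - 1`;
moreover `Δ(Gₙ) = 2n - 2`, so this attains the bound `b(G) ≤ Δ(G) + 1`. -/
theorem bNum_Gn (n : ℕ) (hn : 3 ≤ n) :
    bNum (Gn n) = 2 * n - 1 ∧ maxDeg (Gn n) = 2 * n - 2 :=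
  bNum_Gn_general n (by lia)
end

section
/- For every integer n ≥ 3 there exists a finite graph G (namely G_n) with Γ(G) = b(G) = 2n − 1 and z(G) = n; consequently, the gap min{Γ(G), b(G)} − z(G) can be made arbitrarily large. -/
open SimpleGraph

universe u v

/-!
Write `n = d + 1` and let `G` be the disjoint union of `2d + 1` stars with `2d` leaves each and of
the graph obtained from `K_{d+1}` by `d` rounds of attaching a leaf to every vertex. All degrees are
at most `2d`, so no Grundy coloring or b-coloring uses more than `2d + 1` colors. Giving each new
round of leaves the color `0` and raising all other colors by one makes the Grundy number `2d + 1`;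
coloring the centers of the stars with distinct colors makes the b-chromatic number `2d + 1`.

In a z-coloring with `k` colors the vertex `u_k` has `k - 1` neighbors of degree at least `k - 1`.
A round of leaves raises each old degree by one and adds only vertices of degree one, so after `d`
rounds every vertex has at most `d` neighbors of degree greater than `d`. The same holds in the
stars, hence `z(G) ≤ d + 1`, and the coloring of `K_{d+1}` extends to a z-coloring of `G`.
-/

section Bounds

variable {V : Type u} {G : SimpleGraph V} {c : V → ℕ} {d k : ℕ}

/-- The neighbors of `v` whose degree exceeds `d`; degrees are measured by `Set.encard`, so that no
local finiteness is needed. -/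
def heavyNeighborSet (G : SimpleGraph V) (d : ℕ) (v : V) : Set V :=
  {w ∈ G.neighborSet v | (d : ℕ∞) < (G.neighborSet w).encard}

lemma le_encard_neighborSet_add_one {v : V} {j : ℕ}
    (h : ∀ i < k, i ≠ j → ∃ w, G.Adj v w ∧ c w = i) :
    (k : ℕ∞) ≤ (G.neighborSet v).encard + 1 := by
  have hcolors : (Finset.range k : Set ℕ) ⊆ insert j (c '' G.neighborSet v) := fun i hi ↦
    or_iff_not_imp_left.2 fun hij ↦ h i (Finset.mem_range.1 hi) hij
  calc (k : ℕ∞) = (Finset.range k : Set ℕ).encard := by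
        rw [Set.encard_coe_eq_coe_finsetCard, Finset.card_range]
    _ ≤ (insert j (c '' G.neighborSet v)).encard := Set.encard_le_encard hcolors
    _ ≤ (c '' G.neighborSet v).encard + 1 := Set.encard_insert_le _ _
    _ ≤ (G.neighborSet v).encard + 1 := by gcongr; exact Set.encard_image_le c _

lemma IsGrundyColoring.le_succ_of_encard_neighborSet_le (hc : IsGrundyColoring G k c)
    (hG : ∀ v, (G.neighborSet v).encard ≤ d) : k ≤ d + 1 := by
  obtain rfl | hk := k.eq_zero_or_pos
  · exact Nat.zero_le _
  obtain ⟨-, -, hsurj, hgrundy⟩ := hc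
  obtain ⟨v, hv⟩ := hsurj (k - 1) (by lia)
  have hkv := le_encard_neighborSet_add_one (k := k) (j := k - 1) fun i hi hik ↦
    hgrundy v i (by lia)
  have hkd : (k : ℕ∞) ≤ d + 1 := hkv.trans (by gcongr; exact hG v)
  exact_mod_cast hkd

lemma IsBColoring.le_succ_of_encard_neighborSet_le (hc : IsBColoring G k c)
    (hG : ∀ v, (G.neighborSet v).encard ≤ d) : k ≤ d + 1 := by
  obtain rfl | hk := k.eq_zero_or_pos
  · exact Nat.zero_le _
  obtain ⟨-, -, hb⟩ := hc
  obtain ⟨v, -, hv⟩ := hb 0 hk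
  have hkd : (k : ℕ∞) ≤ d + 1 :=
    (le_encard_neighborSet_add_one hv).trans (by gcongr; exact hG v)
  exact_mod_cast hkd

lemma IsZColoring.le_succ_of_encard_heavyNeighborSet_le (hc : IsZColoring G k c)
    (hG : ∀ v, (heavyNeighborSet G d v).encard ≤ d) : k ≤ d + 1 := by
  by_contra! hk
  obtain ⟨-, -, -, -, u, hcu, hadj, hu⟩ := hc
  have hdeg (j : ℕ) (hj : j < k) : (d : ℕ∞) < (G.neighborSet (u j)).encard := by
    have hkj := le_encard_neighborSet_add_one fun i hi hij ↦ hu i hi j hj hij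
    have hdk : (d : ℕ∞) + 1 < k := by exact_mod_cast hk
    exact (ENat.add_lt_add_iff_right ENat.one_ne_top).1 (hdk.trans_le hkj)
  have hheavy : u '' Finset.range (k - 1) ⊆ heavyNeighborSet G d (u (k - 1)) := by
    rintro _ ⟨j, hj, rfl⟩
    have hjk : j < k - 1 := Finset.mem_range.1 hj
    exact ⟨hadj j hjk, hdeg j (by lia)⟩
  have hinj : Set.InjOn u (Finset.range (k - 1)) := Set.LeftInvOn.injOn (f₁' := c) fun j hj ↦
    hcu j (by have := Finset.mem_range.1 hj; lia)
  have hkd : ((k - 1 : ℕ) : ℕ∞) ≤ d := by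
    simpa only [hinj.encard_image, Set.encard_coe_eq_coe_finsetCard, Finset.card_range]
      using (Set.encard_le_encard hheavy).trans (hG _)
  have : k - 1 ≤ d := by exact_mod_cast hkd
  lia

lemma grundyNum_eq_succ (hc : IsGrundyColoring G (d + 1) c)
    (hG : ∀ v, (G.neighborSet v).encard ≤ d) : grundyNum G = d + 1 :=
  IsGreatest.csSup_eq ⟨⟨c, hc⟩, fun _ ⟨_, h⟩ ↦ h.le_succ_of_encard_neighborSet_le hG⟩

lemma bNum_eq_succ (hc : IsBColoring G (d + 1) c)
    (hG : ∀ v, (G.neighborSet v).encard ≤ d) : bNum G = d + 1 :=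
  IsGreatest.csSup_eq ⟨⟨c, hc⟩, fun _ ⟨_, h⟩ ↦ h.le_succ_of_encard_neighborSet_le hG⟩

lemma zNum_eq_succ (hc : IsZColoring G (d + 1) c)
    (hG : ∀ v, (heavyNeighborSet G d v).encard ≤ d) : zNum G = d + 1 :=
  IsGreatest.csSup_eq ⟨⟨c, hc⟩, fun _ ⟨_, h⟩ ↦ h.le_succ_of_encard_heavyNeighborSet_le hG⟩

lemma encard_heavyNeighborSet_le (G : SimpleGraph V) (d : ℕ) (v : V) :
    (heavyNeighborSet G d v).encard ≤ (G.neighborSet v).encard :=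
  Set.encard_le_encard (Set.sep_subset _ _)

lemma encard_neighborSet_add_one_le (G : SimpleGraph V) (v : V) :
    (G.neighborSet v).encard + 1 ≤ ENat.card V := by
  rw [← Set.encard_insert_of_notMem G.notMem_neighborSet_self]
  exact Set.encard_le_card

end Bounds

section Transport

variable {V : Type u} {W : Type v} {G : SimpleGraph V} {H : SimpleGraph W}
  {c : V → ℕ} {c' : W → ℕ} {k l : ℕ}

lemma IsZColoring.isGrundyColoring (hc : IsZColoring G k c) : IsGrundyColoring G k c :=
  ⟨hc.1, hc.2.1, hc.2.2.1, hc.2.2.2.1⟩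

lemma IsZColoring.of_hom (hc : IsZColoring G k c) (hc' : IsGrundyColoring H k c') (f : G →g H)
    (hf : ∀ v, c' (f v) = c v) : IsZColoring H k c' := by
  obtain ⟨-, -, -, -, u, hcu, hadj, hu⟩ := hc
  obtain ⟨hlt, hproper, hsurj, hgrundy⟩ := hc'
  refine ⟨hlt, hproper, hsurj, hgrundy, f ∘ u, fun j hj ↦ (hf _).trans (hcu j hj),
    fun j hj ↦ f.map_adj (hadj j hj), fun i hi j hj hij ↦ ?_⟩
  obtain ⟨w, hw, hcw⟩ := hu i hi j hj hij
  exact ⟨f w, f.map_adj hw, (hf w).trans hcw⟩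

lemma IsGrundyColoring.sum (hc : IsGrundyColoring G k c) (hc' : IsGrundyColoring H l c')
    (hlk : l ≤ k) : IsGrundyColoring (G ⊕g H) k (Sum.elim c c') := by
  obtain ⟨hlt, hproper, hsurj, hgrundy⟩ := hc
  obtain ⟨hlt', hproper', -, hgrundy'⟩ := hc'
  refine ⟨?_, ?_, fun i hi ↦ ?_, ?_⟩
  · rintro (v | w)
    exacts [hlt v, (hlt' w).trans_le hlk]
  · rintro (v | v) (w | w) h
    exacts [hproper (sum_adj_inl.1 h), (not_adj_sum_inl_inr _ _ h).elim,
      (not_adj_sum_inl_inr _ _ h.symm).elim, hproper' (sum_adj_inr.1 h)]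
  · obtain ⟨v, hv⟩ := hsurj i hi
    exact ⟨.inl v, hv⟩
  · rintro (v | v) i hi
    · obtain ⟨w, hw, hcw⟩ := hgrundy v i hi
      exact ⟨.inl w, sum_adj_inl.2 hw, hcw⟩
    · obtain ⟨w, hw, hcw⟩ := hgrundy' v i hi
      exact ⟨.inr w, sum_adj_inr.2 hw, hcw⟩

lemma IsZColoring.sum (hc : IsZColoring G k c) (hc' : IsGrundyColoring H l c') (hlk : l ≤ k) :
    IsZColoring (G ⊕g H) k (Sum.elim c c') :=
  hc.of_hom (hc.isGrundyColoring.sum hc' hlk) Embedding.sumInl.toHom fun _ ↦ rfl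

lemma IsBColoring.sum_right (hc' : IsBColoring H k c') (hlt : ∀ v, c v < k)
    (hproper : ∀ ⦃v w⦄, G.Adj v w → c v ≠ c w) : IsBColoring (G ⊕g H) k (Sum.elim c c') := by
  obtain ⟨hlt', hproper', hb⟩ := hc'
  refine ⟨?_, ?_, fun i hi ↦ ?_⟩
  · rintro (v | w)
    exacts [hlt v, hlt' w]
  · rintro (v | v) (w | w) h
    exacts [hproper (sum_adj_inl.1 h), (not_adj_sum_inl_inr _ _ h).elim,
      (not_adj_sum_inl_inr _ _ h.symm).elim, hproper' (sum_adj_inr.1 h)]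
  · obtain ⟨v, hv, hvi⟩ := hb i hi
    refine ⟨.inr v, hv, fun j hj hji ↦ ?_⟩
    obtain ⟨w, hw, hcw⟩ := hvi j hj hji
    exact ⟨.inr w, sum_adj_inr.2 hw, hcw⟩

lemma encard_neighborSet_sum_inl (v : V) :
    ((G ⊕g H).neighborSet (.inl v)).encard = (G.neighborSet v).encard := by
  rw [neighborSet_sum_inl, Sum.inl_injective.encard_image]

lemma encard_neighborSet_sum_inr (w : W) :
    ((G ⊕g H).neighborSet (.inr w)).encard = (H.neighborSet w).encard := by
  rw [neighborSet_sum_inr, Sum.inr_injective.encard_image]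

lemma heavyNeighborSet_sum_inl (d : ℕ) (v : V) :
    heavyNeighborSet (G ⊕g H) d (.inl v) = Sum.inl '' heavyNeighborSet G d v := by
  ext (w | w) <;> simp [heavyNeighborSet, encard_neighborSet_sum_inl]

lemma heavyNeighborSet_sum_inr (d : ℕ) (w : W) :
    heavyNeighborSet (G ⊕g H) d (.inr w) = Sum.inr '' heavyNeighborSet H d w := by
  ext (v | v) <;> simp [heavyNeighborSet, encard_neighborSet_sum_inr]

end Transport

section Corona

variable {V : Type u} {G : SimpleGraph V} {c : V → ℕ} {d k : ℕ}

/-- The corona `G ∘ K₁`: a pendant vertex `inr v` is attached to each vertex `inl v` of `G`. -/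
def corona (G : SimpleGraph V) : SimpleGraph (V ⊕ V) where
  Adj
    | .inl v, .inl w => G.Adj v w
    | .inl v, .inr w => v = w
    | .inr v, .inl w => v = w
    | .inr _, .inr _ => False
  symm := ⟨by
    rintro (v | v) (w | w) h
    exacts [h.symm, Eq.symm h, Eq.symm h, h]⟩
  loopless := ⟨by
    rintro (v | v) h
    exacts [G.irrefl h, h]⟩

/-- The inclusion of `G` into its corona. -/
def coronaInl (G : SimpleGraph V) : G →g corona G where
  toFun := Sum.inl
  map_rel' h := h

lemma neighborSet_corona_inl (v : V) :
    (corona G).neighborSet (.inl v) = insert (.inr v) (Sum.inl '' G.neighborSet v) := by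
  ext (w | w) <;> simp [corona, eq_comm]

lemma neighborSet_corona_inr (v : V) : (corona G).neighborSet (.inr v) = {.inl v} := by
  ext (w | w) <;> simp [corona, eq_comm]

lemma encard_neighborSet_corona_inl (v : V) :
    ((corona G).neighborSet (.inl v)).encard = (G.neighborSet v).encard + 1 := by
  rw [neighborSet_corona_inl, Set.encard_insert_of_notMem (by simp),
    Sum.inl_injective.encard_image]

lemma encard_neighborSet_corona_inr (v : V) :
    ((corona G).neighborSet (.inr v)).encard = 1 := by
  rw [neighborSet_corona_inr, Set.encard_singleton]

lemma heavyNeighborSet_corona_inl (d : ℕ) (v : V) :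
    heavyNeighborSet (corona G) (d + 1) (.inl v) = Sum.inl '' heavyNeighborSet G d v := by
  ext (w | w)
  · have hdeg : ((d + 1 : ℕ) : ℕ∞) < ((corona G).neighborSet (.inl w)).encard ↔
        (d : ℕ∞) < (G.neighborSet w).encard := by
      rw [encard_neighborSet_corona_inl, Nat.cast_succ,
        ENat.add_lt_add_iff_right ENat.one_ne_top]
    rw [Sum.inl_injective.mem_set_image]
    exact and_congr Iff.rfl hdeg
  · simp [heavyNeighborSet, encard_neighborSet_corona_inr]

lemma IsGrundyColoring.corona_succ (hc : IsGrundyColoring G k c) (hk : 0 < k) :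
    IsGrundyColoring (corona G) (k + 1) (Sum.elim (c · + 1) fun _ ↦ 0) := by
  obtain ⟨hlt, hproper, hsurj, hgrundy⟩ := hc
  refine ⟨?_, ?_, ?_, ?_⟩
  · rintro (v | _)
    exacts [Nat.succ_lt_succ (hlt v), k.succ_pos]
  · rintro (v | v) (w | w) h
    exacts [(hproper h <| Nat.succ_injective ·), Nat.succ_ne_zero _, (Nat.succ_ne_zero _).symm,
      h.elim]
  · rintro (_ | i) hi
    · obtain ⟨v, -⟩ := hsurj 0 hk
      exact ⟨.inr v, rfl⟩
    · obtain ⟨v, hv⟩ := hsurj i (Nat.lt_of_succ_lt_succ hi)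
      exact ⟨.inl v, congrArg Nat.succ hv⟩
  · rintro (v | v) i hi
    · obtain _ | i := i
      · exact ⟨.inr v, rfl, rfl⟩
      · obtain ⟨w, hw, hcw⟩ := hgrundy v i (Nat.lt_of_succ_lt_succ hi)
        exact ⟨.inl w, hw, congrArg Nat.succ hcw⟩
    · exact absurd hi i.not_lt_zero

lemma IsGrundyColoring.corona_self (hc : IsGrundyColoring G k c) (hk : 2 ≤ k) :
    IsGrundyColoring (corona G) k (Sum.elim c fun v ↦ if c v = 0 then 1 else 0) := by
  obtain ⟨hlt, hproper, hsurj, hgrundy⟩ := hc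
  refine ⟨?_, ?_, fun i hi ↦ ?_, ?_⟩
  · rintro (v | v)
    · exact hlt v
    · simp only [Sum.elim_inr]
      split_ifs <;> lia
  · rintro (v | v) (w | w) h
    · exact hproper h
    · obtain rfl : v = w := h
      simp only [Sum.elim_inl, Sum.elim_inr]
      split_ifs <;> lia
    · obtain rfl : v = w := h
      simp only [Sum.elim_inl, Sum.elim_inr]
      split_ifs <;> lia
    · exact h.elim
  · obtain ⟨v, hv⟩ := hsurj i hi
    exact ⟨.inl v, hv⟩
  · rintro (v | v) i hi
    · obtain ⟨w, hw, hcw⟩ := hgrundy v i hi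
      exact ⟨.inl w, hw, hcw⟩
    · simp only [Sum.elim_inr] at hi
      split_ifs at hi with hv
      · exact ⟨.inl v, rfl, by simp only [Sum.elim_inl]; lia⟩
      · exact absurd hi i.not_lt_zero

lemma IsZColoring.corona_self (hc : IsZColoring G k c) (hk : 2 ≤ k) :
    IsZColoring (corona G) k (Sum.elim c fun v ↦ if c v = 0 then 1 else 0) :=
  hc.of_hom (hc.isGrundyColoring.corona_self hk) (coronaInl G) fun _ ↦ rfl

/-- The vertex type of the `j`-fold corona of a graph on `V`. -/
def IteratedCoronaVertex (V : Type u) : ℕ → Type u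
  | 0 => V
  | j + 1 => IteratedCoronaVertex V j ⊕ IteratedCoronaVertex V j

/-- The `j`-fold corona `(⋯((G ∘ K₁) ∘ K₁)⋯) ∘ K₁`. -/
def iteratedCorona (G : SimpleGraph V) : (j : ℕ) → SimpleGraph (IteratedCoronaVertex V j)
  | 0 => G
  | j + 1 => corona (iteratedCorona G j)

instance [Finite V] (j : ℕ) : Finite (IteratedCoronaVertex V j) := by
  induction j with
  | zero => exact ‹Finite V›
  | succ j _ => exact inferInstanceAs (Finite (IteratedCoronaVertex V j ⊕ IteratedCoronaVertex V j))

lemma IsGrundyColoring.exists_iteratedCorona (hc : IsGrundyColoring G k c) (hk : 0 < k) :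
    ∀ j, ∃ c', IsGrundyColoring (iteratedCorona G j) (k + j) c'
  | 0 => ⟨c, hc⟩
  | j + 1 =>
    have ⟨_, hc'⟩ := hc.exists_iteratedCorona hk j
    ⟨_, hc'.corona_succ (by lia)⟩

lemma IsZColoring.exists_iteratedCorona (hc : IsZColoring G k c) (hk : 2 ≤ k) :
    ∀ j, ∃ c', IsZColoring (iteratedCorona G j) k c'
  | 0 => ⟨c, hc⟩
  | j + 1 =>
    have ⟨_, hc'⟩ := hc.exists_iteratedCorona hk j
    ⟨_, hc'.corona_self hk⟩

lemma encard_neighborSet_iteratedCorona_le (hG : ∀ v, (G.neighborSet v).encard ≤ d) (j : ℕ)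
    (v : IteratedCoronaVertex V j) :
    ((iteratedCorona G j).neighborSet v).encard ≤ (d + j : ℕ) := by
  induction j with
  | zero => exact hG v
  | succ j ih =>
    obtain v | v := v
    · calc ((corona (iteratedCorona G j)).neighborSet (.inl v)).encard
          = ((iteratedCorona G j).neighborSet v).encard + 1 := encard_neighborSet_corona_inl v
        _ ≤ (d + j : ℕ) + 1 := by gcongr; exact ih v
    · calc ((corona (iteratedCorona G j)).neighborSet (.inr v)).encard
          = 1 := encard_neighborSet_corona_inr v
        _ ≤ (d + (j + 1) : ℕ) := by norm_cast; lia

lemma encard_heavyNeighborSet_iteratedCorona_le (hd : 1 ≤ d)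
    (hG : ∀ v, (G.neighborSet v).encard ≤ d) (j : ℕ) (v : IteratedCoronaVertex V j) :
    (heavyNeighborSet (iteratedCorona G j) j v).encard ≤ d := by
  induction j with
  | zero => exact (encard_heavyNeighborSet_le _ _ _).trans (hG v)
  | succ j ih =>
    obtain v | v := v
    · calc (heavyNeighborSet (corona (iteratedCorona G j)) (j + 1) (.inl v)).encard
          = (heavyNeighborSet (iteratedCorona G j) j v).encard := by
            rw [heavyNeighborSet_corona_inl, Sum.inl_injective.encard_image]
        _ ≤ d := ih v
    · calc (heavyNeighborSet (corona (iteratedCorona G j)) (j + 1) (.inr v)).encard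
          ≤ ((corona (iteratedCorona G j)).neighborSet (.inr v)).encard :=
            encard_heavyNeighborSet_le _ _ _
        _ = 1 := encard_neighborSet_corona_inr v
        _ ≤ d := by exact_mod_cast hd

end Corona

section StarForest

variable {α : Type u} {d : ℕ}

/-- The disjoint union, over `a : α`, of the stars on `α` centered at `a`; the vertex `(a, x)` is
the copy of `x` in the star centered at `a`. -/
def starForest (α : Type u) : SimpleGraph (α × α) where
  Adj p q := p.1 = q.1 ∧ (starGraph p.1).Adj p.2 q.2
  symm := ⟨by
    rintro ⟨a, x⟩ ⟨_, y⟩ ⟨rfl, h⟩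
    exact ⟨rfl, h.symm⟩⟩
  loopless := ⟨fun p h ↦ (starGraph p.1).irrefl h.2⟩

lemma neighborSet_starForest (a x : α) :
    (starForest α).neighborSet (a, x) = Prod.mk a '' (starGraph a).neighborSet x := by
  ext ⟨b, y⟩
  constructor
  · rintro ⟨rfl, h⟩
    exact ⟨y, h, rfl⟩
  · rintro ⟨z, h, hz⟩
    obtain ⟨rfl, rfl⟩ := Prod.mk.inj hz
    exact ⟨rfl, h⟩

lemma encard_neighborSet_starForest_add_one_le (p : α × α) :
    ((starForest α).neighborSet p).encard + 1 ≤ ENat.card α := by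
  rw [neighborSet_starForest, (Prod.mk_right_injective p.1).encard_image]
  exact encard_neighborSet_add_one_le _ _

lemma encard_neighborSet_starForest_le_one {a x : α} (hx : x ≠ a) :
    ((starForest α).neighborSet (a, x)).encard ≤ 1 := by
  rw [neighborSet_starForest, (Prod.mk_right_injective a).encard_image,
    ← Set.encard_singleton a]
  exact Set.encard_le_encard fun y hy ↦ (starGraph_adj.1 hy).2.resolve_left hx

lemma encard_heavyNeighborSet_starForest_le_one (hd : 1 ≤ d) (p : α × α) :
    (heavyNeighborSet (starForest α) d p).encard ≤ 1 := by
  rw [← Set.encard_singleton (p.1, p.1)]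
  refine Set.encard_le_encard fun ⟨b, y⟩ ⟨⟨hb, _⟩, hy⟩ ↦ ?_
  obtain rfl : p.1 = b := hb
  by_contra hne
  have hyb : y ≠ p.1 := fun h ↦ hne (by rw [h]; rfl)
  have hd1 : (d : ℕ∞) < 1 := hy.trans_le (encard_neighborSet_starForest_le_one hyb)
  exact hd1.not_ge (by exact_mod_cast hd)

lemma isGrundyColoring_starForest [Nontrivial α] [DecidableEq α] :
    IsGrundyColoring (starForest α) 2 fun p ↦ if p.2 = p.1 then 1 else 0 := by
  refine ⟨fun p ↦ ?_, ?_, fun i hi ↦ ?_, ?_⟩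
  · dsimp only
    split_ifs <;> lia
  · rintro ⟨a, x⟩ ⟨b, y⟩ ⟨hab, h⟩
    obtain rfl : a = b := hab
    obtain ⟨hxy, hx | hy⟩ : x ≠ y ∧ (x = a ∨ y = a) := starGraph_adj.1 h
    · simp [hx, hx ▸ hxy.symm]
    · simp [hy, hy ▸ hxy]
  · obtain ⟨a, x, hax⟩ := exists_pair_ne α
    interval_cases i
    exacts [⟨(a, x), if_neg hax.symm⟩, ⟨(a, a), if_pos rfl⟩]
  · rintro ⟨a, x⟩ i hi
    obtain ⟨rfl, rfl⟩ : i = 0 ∧ x = a := by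
      dsimp only at hi
      split_ifs at hi with hx
      exacts [⟨Nat.lt_one_iff.1 hi, hx⟩, absurd hi i.not_lt_zero]
    obtain ⟨y, hy⟩ := exists_ne x
    exact ⟨(x, y), ⟨rfl, starGraph_center_adj hy.symm⟩, if_neg hy⟩

lemma isBColoring_starForest (k : ℕ) : IsBColoring (starForest (Fin k)) k fun p ↦ p.2 := by
  refine ⟨fun p ↦ p.2.isLt, fun p q h ↦ Fin.val_injective.ne h.2.ne, fun i hi ↦
    ⟨(⟨i, hi⟩, ⟨i, hi⟩), rfl, fun j hj hji ↦ ⟨(⟨i, hi⟩, ⟨j, hj⟩), ⟨rfl, ?_⟩, rfl⟩⟩⟩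
  exact starGraph_center_adj fun h ↦ hji (Fin.val_eq_of_eq h).symm

end StarForest

section GapGraph

lemma encard_neighborSet_le_of_fin {d : ℕ} (G : SimpleGraph (Fin (d + 1))) (v : Fin (d + 1)) :
    (G.neighborSet v).encard ≤ d :=
  (ENat.add_le_add_iff_right ENat.one_ne_top).1 (by simpa using encard_neighborSet_add_one_le G v)

lemma isZColoring_top (d : ℕ) : IsZColoring (⊤ : SimpleGraph (Fin (d + 1))) (d + 1) Fin.val := by
  have hval (i : ℕ) (hi : i < d + 1) : (Fin.ofNat (d + 1) i).val = i := Nat.mod_eq_of_lt hi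
  have hsees (v : Fin (d + 1)) (i : ℕ) (hi : i < d + 1) (hiv : i ≠ v) :
      ∃ w : Fin (d + 1), (⊤ : SimpleGraph (Fin (d + 1))).Adj v w ∧ w = i :=
    ⟨⟨i, hi⟩, fun h ↦ hiv (Fin.val_eq_of_eq h).symm, rfl⟩
  refine ⟨Fin.isLt, fun _ _ ↦ Fin.val_injective.ne, fun i hi ↦ ⟨⟨i, hi⟩, rfl⟩,
    fun v i hi ↦ hsees v i (hi.trans v.isLt) hi.ne, Fin.ofNat (d + 1), hval, fun j hj h ↦ ?_,
    fun i hi j hj hij ↦ hsees _ i hi (by rwa [hval j hj])⟩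
  have := congrArg Fin.val h
  rw [hval _ (by lia), hval _ (by lia)] at this
  lia

/-- A graph with Grundy number and b-chromatic number `2d + 1` and z-chromatic number `d + 1`
for `d ≥ 1`: the `d`-fold corona of `K_{d+1}` next to `2d + 1` stars with `2d` leaves each. -/
def gapGraph (d : ℕ) : SimpleGraph
    (IteratedCoronaVertex (Fin (d + 1)) d ⊕ Fin (2 * d + 1) × Fin (2 * d + 1)) :=
  iteratedCorona ⊤ d ⊕g starForest (Fin (2 * d + 1))

variable {d : ℕ}

lemma encard_neighborSet_gapGraph_le (v) :
    ((gapGraph d).neighborSet v).encard ≤ (2 * d : ℕ) := by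
  obtain v | p := v
  · rw [gapGraph, encard_neighborSet_sum_inl, two_mul]
    exact encard_neighborSet_iteratedCorona_le (encard_neighborSet_le_of_fin ⊤) d v
  · rw [gapGraph, encard_neighborSet_sum_inr]
    exact (ENat.add_le_add_iff_right ENat.one_ne_top).1
      (by simpa using encard_neighborSet_starForest_add_one_le p)

lemma encard_heavyNeighborSet_gapGraph_le (hd : 1 ≤ d) (v) :
    (heavyNeighborSet (gapGraph d) d v).encard ≤ d := by
  obtain v | p := v
  · rw [gapGraph, heavyNeighborSet_sum_inl, Sum.inl_injective.encard_image]
    exact encard_heavyNeighborSet_iteratedCorona_le hd (encard_neighborSet_le_of_fin ⊤) d v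
  · rw [gapGraph, heavyNeighborSet_sum_inr, Sum.inr_injective.encard_image]
    exact (encard_heavyNeighborSet_starForest_le_one hd p).trans (by exact_mod_cast hd)

lemma exists_isGrundyColoring_iteratedCorona_top (d : ℕ) :
    ∃ c, IsGrundyColoring (iteratedCorona (⊤ : SimpleGraph (Fin (d + 1))) d) (2 * d + 1) c := by
  convert (isZColoring_top d).isGrundyColoring.exists_iteratedCorona d.succ_pos d using 3
  lia

lemma grundyNum_gapGraph (hd : 1 ≤ d) : grundyNum (gapGraph d) = 2 * d + 1 := by
  have : Nontrivial (Fin (2 * d + 1)) := Fin.nontrivial_iff_two_le.2 (by lia)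
  obtain ⟨c, hc⟩ := exists_isGrundyColoring_iteratedCorona_top d
  exact grundyNum_eq_succ (hc.sum isGrundyColoring_starForest (by lia))
    encard_neighborSet_gapGraph_le

lemma bNum_gapGraph (d : ℕ) : bNum (gapGraph d) = 2 * d + 1 := by
  obtain ⟨c, hlt, hproper, -⟩ := exists_isGrundyColoring_iteratedCorona_top d
  exact bNum_eq_succ ((isBColoring_starForest _).sum_right hlt hproper)
    encard_neighborSet_gapGraph_le

lemma zNum_gapGraph (hd : 1 ≤ d) : zNum (gapGraph d) = d + 1 := by
  have : Nontrivial (Fin (2 * d + 1)) := Fin.nontrivial_iff_two_le.2 (by lia)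
  obtain ⟨c, hc⟩ := (isZColoring_top d).exists_iteratedCorona (by lia) d
  exact zNum_eq_succ (hc.sum isGrundyColoring_starForest (by lia))
    (encard_heavyNeighborSet_gapGraph_le hd)

end GapGraph

/-- for every `n ≥ 3` there is a finite graph `G` with
`Γ(G) = b(G) = 2n - 1` and `z(G) = n`; hence the gap
`min {Γ(G), b(G)} - z(G)` can be made arbitrarily large. -/
theorem exists_graph_large_gap (n : ℕ) (hn : 3 ≤ n) :
    ∃ (V : Type) (_ : Fintype V) (G : SimpleGraph V),
      grundyNum G = 2 * n - 1 ∧ bNum G = 2 * n - 1 ∧ zNum G = n ∧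
      min (grundyNum G) (bNum G) - zNum G = n - 1 := by
  have hd : 1 ≤ n - 1 := by lia
  have hg : grundyNum (gapGraph (n - 1)) = 2 * n - 1 := by rw [grundyNum_gapGraph hd]; lia
  have hb : bNum (gapGraph (n - 1)) = 2 * n - 1 := by rw [bNum_gapGraph]; lia
  have hz : zNum (gapGraph (n - 1)) = n := by rw [zNum_gapGraph hd]; lia
  refine ⟨_, Fintype.ofFinite _, gapGraph (n - 1), hg, hb, hz, ?_⟩
  rw [hg, hb, hz, min_self]
  lia
end

section
/- For all integers k ≥ 1 and t ≥ 1, every vertex of degree at least t in the tree atom T_k has at most k − t neighbors of degree at least t in T_k. -/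
open SimpleGraph

universe u v

/-- Vertex set of the tree atom `Tₖ`: `T₁` has one vertex, and `T_{k+1}` has
one new pendant leaf (the `Sum.inr` copy) for each vertex of `Tₖ`. -/
def AtomVert : ℕ → Type
  | 0 => Empty
  | 1 => PUnit
  | (k + 2) => AtomVert (k + 1) ⊕ AtomVert (k + 1)

/-- Attach one new pendant leaf (`Sum.inr a`) to each vertex (`Sum.inl a`)
of a graph. -/
def pendantExtend {W : Type} (G : SimpleGraph W) : SimpleGraph (W ⊕ W) :=
  SimpleGraph.fromRel (fun x y =>
    (∃ a b, x = Sum.inl a ∧ y = Sum.inl b ∧ G.Adj a b) ∨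
    (∃ a, x = Sum.inl a ∧ y = Sum.inr a))

/-- The tree atom `Tₖ`: `T₁ = K₁`, `T₂ = K₂`, and `T_{k+1}` is obtained from
`Tₖ` by attaching one pendant leaf to each vertex of `Tₖ`. -/
def AtomGraph : (k : ℕ) → SimpleGraph (AtomVert k)
  | 0 => ⊥
  | 1 => ⊥
  | (k + 2) => pendantExtend (AtomGraph (k + 1))

/-!
Passing from `Tₖ` to `Tₖ₊₁` raises the degree of every old vertex by one, and the new leaves have
degree one. So for `t ≥ 1` the neighbors of degree at least `t + 1` of an old vertex of `Tₖ₊₁` are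
exactly its neighbors of degree at least `t` in `Tₖ`, and the bound `k - t = (k + 1) - (t + 1)` is
inherited. A new leaf has a single neighbor, and if that neighbor has degree at least `t + 1`, then
`t + 1 ≤ k` because all degrees in `Tₖ₊₁` are at most `k`, so the bound is at least one. The same
bound on the degrees settles the thresholds `0` and `1`.
-/

/-- The neighbors of `v` in `G` of degree at least `t`. Degrees are measured by `Set.ncard`, so a
vertex with infinitely many neighbors counts as having degree `0`. -/
def largeNeighborSet {V : Type u} (G : SimpleGraph V) (t : ℕ) (v : V) : Set V :=
  {u | G.Adj v u ∧ t ≤ (G.neighborSet u).ncard}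

theorem ncard_largeNeighborSet_le_degree {V : Type u} (G : SimpleGraph V) (t : ℕ) (v : V)
    [Finite (G.neighborSet v)] :
    (largeNeighborSet G t v).ncard ≤ (G.neighborSet v).ncard :=
  Set.ncard_le_ncard (fun _ hu => hu.1) (Set.toFinite _)

section PendantExtend

variable {W : Type} (G : SimpleGraph W) (a b : W)

@[simp]
theorem pendantExtend_adj_inl_inl :
    (pendantExtend G).Adj (Sum.inl a) (Sum.inl b) ↔ G.Adj a b := by
  simpa [pendantExtend, G.adj_comm b a] using fun h : G.Adj a b => h.ne

@[simp]
theorem pendantExtend_adj_inl_inr :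
    (pendantExtend G).Adj (Sum.inl a) (Sum.inr b) ↔ b = a := by
  simp [pendantExtend]

@[simp]
theorem pendantExtend_adj_inr_inl :
    (pendantExtend G).Adj (Sum.inr a) (Sum.inl b) ↔ b = a := by
  simp [pendantExtend, eq_comm]

@[simp]
theorem not_pendantExtend_adj_inr_inr :
    ¬(pendantExtend G).Adj (Sum.inr a) (Sum.inr b) := by
  simp [pendantExtend]

theorem pendantExtend_neighborSet_inl :
    (pendantExtend G).neighborSet (Sum.inl a) =
      insert (Sum.inr a) (Sum.inl '' G.neighborSet a) := by
  ext (x | x) <;> simp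

theorem pendantExtend_neighborSet_inr :
    (pendantExtend G).neighborSet (Sum.inr a) = {Sum.inl a} := by
  ext (x | x) <;> simp

theorem ncard_pendantExtend_neighborSet_inl [Finite (G.neighborSet a)] :
    ((pendantExtend G).neighborSet (Sum.inl a)).ncard = (G.neighborSet a).ncard + 1 := by
  rw [pendantExtend_neighborSet_inl, Set.ncard_insert_of_notMem (by simp),
    Set.ncard_image_of_injective _ Sum.inl_injective]

theorem ncard_pendantExtend_neighborSet_inr :
    ((pendantExtend G).neighborSet (Sum.inr a)).ncard = 1 := by
  rw [pendantExtend_neighborSet_inr, Set.ncard_singleton]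

theorem largeNeighborSet_pendantExtend_inl [∀ x, Finite (G.neighborSet x)] {t : ℕ} (ht : 1 ≤ t) :
    largeNeighborSet (pendantExtend G) (t + 1) (Sum.inl a) =
      Sum.inl '' largeNeighborSet G t a := by
  ext (x | x)
  · simp [largeNeighborSet, ncard_pendantExtend_neighborSet_inl]
  · simp [largeNeighborSet, ncard_pendantExtend_neighborSet_inr, Nat.ne_of_gt ht]

theorem ncard_largeNeighborSet_pendantExtend_inl [∀ x, Finite (G.neighborSet x)] {t : ℕ}
    (ht : 1 ≤ t) :
    (largeNeighborSet (pendantExtend G) (t + 1) (Sum.inl a)).ncard =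
      (largeNeighborSet G t a).ncard := by
  rw [largeNeighborSet_pendantExtend_inl G a ht,
    Set.ncard_image_of_injective _ Sum.inl_injective]

theorem ncard_largeNeighborSet_pendantExtend_inr_le_one (t : ℕ) :
    (largeNeighborSet (pendantExtend G) t (Sum.inr a)).ncard ≤ 1 := by
  have : Finite ((pendantExtend G).neighborSet (Sum.inr a)) := by
    rw [pendantExtend_neighborSet_inr]
    infer_instance
  exact (ncard_largeNeighborSet_le_degree _ t _).trans_eq (ncard_pendantExtend_neighborSet_inr G a)

end PendantExtend

instance finite_atomVert : ∀ k, Finite (AtomVert k)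
  | 0 => inferInstanceAs (Finite Empty)
  | 1 => inferInstanceAs (Finite PUnit)
  | k + 2 =>
    have := finite_atomVert (k + 1)
    inferInstanceAs (Finite (AtomVert (k + 1) ⊕ AtomVert (k + 1)))

theorem ncard_atomGraph_neighborSet_lt :
    ∀ (k : ℕ) (v : AtomVert k), ((AtomGraph k).neighborSet v).ncard < k
  | 0, v => v.elim
  | 1, v => by simp [AtomGraph]
  | k + 2, .inl a =>
    (ncard_pendantExtend_neighborSet_inl (AtomGraph (k + 1)) a).trans_lt
      (Nat.succ_lt_succ (ncard_atomGraph_neighborSet_lt (k + 1) a))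
  | k + 2, .inr a =>
    (ncard_pendantExtend_neighborSet_inr (AtomGraph (k + 1)) a).trans_lt (by lia)

theorem lt_of_mem_largeNeighborSet_atomGraph {k t : ℕ} {u v : AtomVert k}
    (hu : u ∈ largeNeighborSet (AtomGraph k) t v) : t < k :=
  hu.2.trans_lt (ncard_atomGraph_neighborSet_lt k u)

theorem atom_neighbors_of_large_degree_general :
    ∀ (k t : ℕ) (v : AtomVert k), (largeNeighborSet (AtomGraph k) t v).ncard ≤ k - t
  | k, 0, v | k, 1, v => by
    have hdeg := ncard_atomGraph_neighborSet_lt k v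
    exact (ncard_largeNeighborSet_le_degree (AtomGraph k) _ v).trans (by lia)
  | 0, _, v => v.elim
  | 1, t + 2, v => by simp [largeNeighborSet, AtomGraph]
  | k + 2, t + 2, .inl a => by
    have ih := atom_neighbors_of_large_degree_general (k + 1) (t + 1) a
    rw [← ncard_largeNeighborSet_pendantExtend_inl _ a (Nat.le_add_left 1 t)] at ih
    exact ih.trans_eq (by lia)
  | k + 2, t + 2, .inr a => by
    obtain hempty | ⟨u, hu⟩ :=
      (largeNeighborSet (AtomGraph (k + 2)) (t + 2) (.inr a)).eq_empty_or_nonempty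
    · simp [hempty]
    · have hone := ncard_largeNeighborSet_pendantExtend_inr_le_one (AtomGraph (k + 1)) a (t + 2)
      have htk := lt_of_mem_largeNeighborSet_atomGraph hu
      exact hone.trans (by lia)

/-- for all `k ≥ 1` and `t ≥ 1`, every vertex of degree at least
`t` in the tree atom `Tₖ` has at most `k - t` neighbors of degree at least `t`
in `Tₖ` (degrees measured as `Set.ncard` of neighbor sets). -/
theorem atom_neighbors_of_large_degree (k t : ℕ) (hk : 1 ≤ k) (ht : 1 ≤ t)
    (v : AtomVert k) (hv : t ≤ ((AtomGraph k).neighborSet v).ncard) :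
    {u : AtomVert k | (AtomGraph k).Adj v u ∧
        t ≤ ((AtomGraph k).neighborSet u).ncard}.ncard ≤ k - t :=
  atom_neighbors_of_large_degree_general k t v
end
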